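/- arXiv:1712.01542 — 3 statements merged into one kernel-verified Lean document; each statement's English description precedes it below -/
import Mathlib

section
/- Let F be a field of characteristic 2 and let η ∈ F with η = 0 or η = ω, where ω ∈ F \ {x² + x : x ∈ F}. The Lie algebra L_{6,7}^{(2)}(η) over F, with basis x₁,…,x₆ and nonzero brackets [x₁,x₂] = x₅, [x₁,x₃] = x₆, [x₂,x₄] = η·x₆, [x₃,x₄] = x₅ + x₆, is capable. -/
open Module

universe u

/-- A witness to the capability of a Lie algebra `L` over `F`: a Lie algebra `E`
together with an isomorphism `L ≃ E ⧸ Z(E)`. -/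
structure CapableWitness (F : Type u) (L : Type u) [Field F] [LieRing L] [LieAlgebra F L] where
  carrier : Type u
  [lieRing : LieRing carrier]
  [lieAlgebra : LieAlgebra F carrier]
  equiv : L ≃ₗ⁅F⁆ (carrier ⧸ LieAlgebra.center F carrier)

/-- A Lie algebra `L` over a field `F` is capable if there exists a Lie algebra `E` over `F`
with `L ≅ E ⧸ Z(E)`. -/
def IsCapable (F : Type u) (L : Type u) [Field F] [LieRing L] [LieAlgebra F L] : Prop :=
  Nonempty (CapableWitness F L)

/-- `L` is isomorphic to `L_{6,7}^{(2)}(η)`: basis `x₁,…,x₆` with `[x₁,x₂]=x₅`, `[x₁,x₃]=x₆`, `[x₂,x₄]=η·x₆`, `[x₃,x₄]=x₅+x₆`. -/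
def IsL67 (F : Type u) (L : Type u) [Field F] [LieRing L] [LieAlgebra F L] (η : F) : Prop :=
  ∃ b : Basis (Fin 6) F L,
    ⁅b 0, b 1⁆ = b 4 ∧
    ⁅b 0, b 2⁆ = b 5 ∧
    ⁅b 1, b 3⁆ = η • b 5 ∧
    ⁅b 2, b 3⁆ = b 4 + b 5 ∧
    ∀ i j : Fin 6, i < j → (i, j) ≠ (0, 1) → (i, j) ≠ (0, 2) → (i, j) ≠ (1, 3) → (i, j) ≠ (2, 3) → ⁅b i, b j⁆ = 0

/-!
A 2-cocycle `c` on `L` with values in a trivial module defines a central extension `E` of `L`. The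
center of `E` consists of the elements lying over those central `z : L` with `c z = 0`, so if `0` is
the only such `z` then `L ≅ E ⧸ Z(E)` is capable.

Let `e¹, …, e⁶` be the dual basis of `L_{6,7}^{(2)}(η)`. Up to a common sign,
`de⁵ = e¹² + e³⁴`, `de⁶ = e¹³ + η e²⁴ + e³⁴` and `de² = de³ = 0`, so the cochain
`c = e⁵ ∧ (e³ - e²) + e⁶ ∧ e²` is closed: `e¹² ∧ e³` cancels against `e¹³ ∧ e²`, the two terms in
`e³⁴ ∧ e²` cancel, and all other products vanish. The center is spanned by `x₅` and `x₆`, and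
contracting `c` with `s x₅ + t x₆` gives `s (e³ - e²) + t e²`, which is zero only for `s = t = 0`.
-/

open LieAlgebra LieModule.Cohomology

section CentralExtension

variable {R L M : Type*} [CommRing R] [LieRing L] [LieAlgebra R L]

section IsTrivial

variable [LieRing M] [LieAlgebra R M] [IsLieAbelian M] [LieRingModule L M] [LieModule R L M]
  [LieModule.IsTrivial L M]

theorem mem_center_ofTwoCocycle_iff {c : twoCocycle R L M} {x : (Extension.ofTwoCocycle c).L} :
    x ∈ center R (Extension.ofTwoCocycle c).L ↔
      (Extension.ofTwoCocycle c).proj x ∈ center R L ∧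
        c.1 ((Extension.ofTwoCocycle c).proj x) = 0 := by
  set p := (Extension.ofTwoCocycle c).proj
  have lie_eq_zero_iff (y : (Extension.ofTwoCocycle c).L) :
      ⁅y, x⁆ = 0 ↔ ⁅p y, p x⁆ = 0 ∧ c.1 (p x) (p y) = 0 := by
    rw [← twoCochain_skew, neg_eq_zero, Extension.bracket, bracket_ofTwoCocycle,
      trivial_lie_zero L M, trivial_lie_zero L M, add_zero, sub_zero]
    exact (ofProd c).symm.injective.eq_iff.symm.trans Prod.mk_eq_zero
  simp_rw [LieModule.mem_maxTrivSubmodule, LinearMap.ext_iff, lie_eq_zero_iff, forall_and]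
  have hp : Function.Surjective p := (Extension.ofTwoCocycle c).proj_surjective
  exact and_congr (hp.forall (p := fun y => ⁅y, p x⁆ = 0)).symm
    (hp.forall (p := fun y => c.1 (p x) y = 0)).symm

theorem ker_proj_ofTwoCocycle_eq_center {c : twoCocycle R L M}
    (hc : ∀ z ∈ center R L, c.1 z = 0 → z = 0) :
    (Extension.ofTwoCocycle c).proj.ker = center R (Extension.ofTwoCocycle c).L := by
  ext x
  rw [mem_center_ofTwoCocycle_iff, LieHom.mem_ker]
  exact ⟨fun h => by simp [h], fun h => hc _ h.1 h.2⟩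

end IsTrivial

variable [AddCommGroup M] [Module R M]

/-- A trivial module carries the zero bracket, making it an abelian Lie algebra that can serve as
the kernel of `Extension.ofTwoCocycle`. -/
instance : LieRing (TrivialLieModule R L M) where
  bracket _ _ := 0
  add_lie _ _ _ := (add_zero 0).symm
  lie_add _ _ _ := (add_zero 0).symm
  lie_self _ := rfl
  leibniz_lie _ _ _ := (add_zero 0).symm

instance : LieAlgebra R (TrivialLieModule R L M) where
  lie_smul _ _ _ := (smul_zero _).symm

instance : IsLieAbelian (TrivialLieModule R L M) where
  trivial _ _ := rfl

end CentralExtension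

section Capability

variable {F L M : Type u} [Field F] [LieRing L] [LieAlgebra F L]

theorem isCapable_of_ker_eq_center {E : Type u} [LieRing E] [LieAlgebra F E] (p : E →ₗ⁅F⁆ L)
    (hp : Function.Surjective p) (hker : p.ker = center F E) : IsCapable F L := by
  have e : (E ⧸ p.ker) ≃ₗ⁅F⁆ L := p.quotKerEquivRange.trans <|
    (LieEquiv.ofEq p.range ⊤ (by rw [p.range_eq_top.mpr hp])).trans LieSubalgebra.topEquiv
  rw [hker] at e
  exact ⟨{ carrier := E, equiv := e.symm }⟩

theorem isCapable_of_twoCochain [AddCommGroup M] [Module F M] (c : twoCochain F L M)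
    (hcocycle : ∀ x y z, c x ⁅y, z⁆ = c ⁅x, y⁆ z + c y ⁅x, z⁆)
    (hc : ∀ z ∈ center F L, c z = 0 → z = 0) : IsCapable F L := by
  let c₀ : twoCochain F L (TrivialLieModule F L M) := c
  let c' : twoCocycle F L (TrivialLieModule F L M) :=
    ⟨c₀, (mem_twoCocycle_iff_of_trivial F L (TrivialLieModule F L M) c₀).mpr hcocycle⟩
  exact isCapable_of_ker_eq_center (Extension.ofTwoCocycle c').proj
    (Extension.ofTwoCocycle c').proj_surjective (ker_proj_ofTwoCocycle_eq_center hc)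

end Capability

section TwoCochain

variable {R L M ι : Type*} [CommRing R] [LieRing L] [LieAlgebra R L] [AddCommGroup M] [Module R M]

theorem twoCochain_ext_basis [LinearOrder ι] (b : Basis ι R L) {c d : twoCochain R L M}
    (h : ∀ i j, i < j → c (b i) (b j) = d (b i) (b j)) : c = d := by
  refine Subtype.ext (b.ext fun i => b.ext fun j => ?_)
  change c (b i) (b j) = d (b i) (b j)
  rcases lt_trichotomy i j with hij | rfl | hij
  · exact h i j hij
  · rw [twoCochain_alt, twoCochain_alt]
  · rw [← twoCochain_skew, ← twoCochain_skew d, h j i hij]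

variable (R L) in
/-- The Lie bracket of `L`, viewed as a 2-cochain with values in `L`. -/
def lieTwoCochain : twoCochain R L L :=
  ⟨LieModule.toEnd R L L, lie_self⟩

@[simp]
theorem lieTwoCochain_apply (x y : L) : lieTwoCochain R L x y = ⁅x, y⁆ := rfl

/-- The wedge product `φ ∧ ψ` of two linear forms on `L`, as a scalar 2-cochain. -/
def wedge (φ ψ : Dual R L) : twoCochain R L R :=
  ⟨(LinearMap.mul R R).compl₁₂ φ ψ - (LinearMap.mul R R).compl₁₂ ψ φ, fun x => by
    simp [mul_comm]⟩

@[simp]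
theorem wedge_apply (φ ψ : Dual R L) (x y : L) : wedge φ ψ x y = φ x * ψ y - ψ x * φ y := rfl

theorem wedge_coord_basis [LinearOrder ι] (b : Basis ι R L) {i j k l : ι} (hij : i < j)
    (hkl : k < l) :
    wedge (b.coord i) (b.coord j) (b k) (b l) = if (k, l) = (i, j) then 1 else 0 := by
  have h : ¬(k = j ∧ l = i) := by rintro ⟨rfl, rfl⟩; exact hij.asymm hkl
  simp only [wedge_apply, Basis.coord_apply, Basis.repr_self, Finsupp.single_apply,
    Prod.mk.injEq]
  grind

/-- The `M`-valued 2-cochain `(x, y) ↦ c x y • m` obtained from a scalar one. -/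
def twoCochainSmulRight (c : twoCochain R L R) (m : M) : twoCochain R L M :=
  ⟨c.1.compr₂ (LinearMap.toSpanSingleton R M m), fun x => by simp⟩

@[simp]
theorem twoCochainSmulRight_apply (c : twoCochain R L R) (m : M) (x y : L) :
    twoCochainSmulRight c m x y = c x y • m := rfl

end TwoCochain

namespace L67

variable {R L : Type*} [CommRing R] [LieRing L] [LieAlgebra R L]

/-- The bracket that `L_{6,7}^{(2)}(η)` has with respect to the basis `b`, i.e. the 2-cochain
`(e¹² + e³⁴) x₅ + (e¹³ + η e²⁴ + e³⁴) x₆` on a Lie algebra whose own bracket is arbitrary. It agrees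
with `lieTwoCochain` exactly when `b` satisfies the relations of `L_{6,7}^{(2)}(η)`. As in the
statement, `xᵢ` is `b (i - 1)`; likewise `eⁱ` is `b.coord (i - 1)`. -/
noncomputable def bracketCochain (η : R) (b : Basis (Fin 6) R L) : twoCochain R L L :=
  twoCochainSmulRight (wedge (b.coord 0) (b.coord 1) + wedge (b.coord 2) (b.coord 3)) (b 4) +
  twoCochainSmulRight (wedge (b.coord 0) (b.coord 2) + η • wedge (b.coord 1) (b.coord 3) +
    wedge (b.coord 2) (b.coord 3)) (b 5)

variable {η : R} {b : Basis (Fin 6) R L}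

theorem lieTwoCochain_eq_bracketCochain
    (h01 : ⁅b 0, b 1⁆ = b 4) (h02 : ⁅b 0, b 2⁆ = b 5) (h13 : ⁅b 1, b 3⁆ = η • b 5)
    (h23 : ⁅b 2, b 3⁆ = b 4 + b 5)
    (h0 : ∀ i j : Fin 6, i < j → (i, j) ≠ (0, 1) → (i, j) ≠ (0, 2) → (i, j) ≠ (1, 3) →
      (i, j) ≠ (2, 3) → ⁅b i, b j⁆ = 0) :
    lieTwoCochain R L = bracketCochain η b := by
  refine twoCochain_ext_basis b fun i j hij => ?_
  have lie_basis : ⁅b i, b j⁆ = if (i, j) = (0, 1) then b 4 else if (i, j) = (0, 2) then b 5 else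
      if (i, j) = (1, 3) then η • b 5 else if (i, j) = (2, 3) then b 4 + b 5 else 0 := by
    grind
  have wedge_basis {k l : Fin 6} (hkl : k < l) := wedge_coord_basis b hkl hij
  have w01 := wedge_basis (show 0 < 1 by decide)
  have w02 := wedge_basis (show 0 < 2 by decide)
  have w13 := wedge_basis (show 1 < 3 by decide)
  have w23 := wedge_basis (show 2 < 3 by decide)
  simp only [lieTwoCochain_apply, lie_basis, bracketCochain, add_apply_apply, smul_apply_apply,
    twoCochainSmulRight_apply, w01, w02, w13, w23]
  split_ifs <;> simp_all

section

variable (hb : lieTwoCochain R L = bracketCochain η b)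
include hb

theorem lie_eq_of_lieTwoCochain_eq (x y : L) :
    ⁅x, y⁆ =
      (wedge (b.coord 0) (b.coord 1) x y + wedge (b.coord 2) (b.coord 3) x y) • b 4 +
      (wedge (b.coord 0) (b.coord 2) x y + η * wedge (b.coord 1) (b.coord 3) x y +
        wedge (b.coord 2) (b.coord 3) x y) • b 5 := by
  rw [← lieTwoCochain_apply (R := R), hb]
  rfl

theorem coord_one_lie (x y : L) : b.coord 1 ⁅x, y⁆ = 0 := by
  simp [lie_eq_of_lieTwoCochain_eq hb]

theorem coord_two_lie (x y : L) : b.coord 2 ⁅x, y⁆ = 0 := by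
  simp [lie_eq_of_lieTwoCochain_eq hb]

theorem coord_four_lie (x y : L) :
    b.coord 4 ⁅x, y⁆ =
      wedge (b.coord 0) (b.coord 1) x y + wedge (b.coord 2) (b.coord 3) x y := by
  simp [lie_eq_of_lieTwoCochain_eq hb]

theorem coord_five_lie (x y : L) :
    b.coord 5 ⁅x, y⁆ =
      wedge (b.coord 0) (b.coord 2) x y + η * wedge (b.coord 1) (b.coord 3) x y +
        wedge (b.coord 2) (b.coord 3) x y := by
  simp [lie_eq_of_lieTwoCochain_eq hb]

theorem coord_eq_zero_of_mem_center {z : L} (hz : z ∈ center R L) :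
    b.coord 0 z = 0 ∧ b.coord 1 z = 0 ∧ b.coord 2 z = 0 ∧ b.coord 3 z = 0 := by
  have lie_eq_zero (x : L) : ⁅x, z⁆ = 0 := (LieModule.mem_maxTrivSubmodule R L L z).mp hz x
  have h1 : b.coord 1 z = 0 := by
    simpa [lie_eq_zero] using (coord_four_lie hb (b 0) z).symm
  have h2 : b.coord 2 z = 0 := by
    simpa [lie_eq_zero] using (coord_five_lie hb (b 0) z).symm
  have h0 : b.coord 0 z = 0 := by
    simpa [lie_eq_zero] using (coord_four_lie hb (b 1) z).symm
  have h3 : b.coord 3 z = 0 := by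
    simpa [lie_eq_zero] using (coord_four_lie hb (b 2) z).symm
  exact ⟨h0, h1, h2, h3⟩

end

/-- The scalar 2-cochain `e⁵ ∧ (e³ - e²) + e⁶ ∧ e²`, for the basis `e¹, …, e⁶` dual to `b`. It
defines the central extension of `L_{6,7}^{(2)}(η)` that proves capability. -/
noncomputable def extensionCochain (b : Basis (Fin 6) R L) : twoCochain R L R :=
  wedge (b.coord 4) (b.coord 2 - b.coord 1) + wedge (b.coord 5) (b.coord 1)

theorem extensionCochain_isCocycle (hb : lieTwoCochain R L = bracketCochain η b) (x y z : L) :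
    extensionCochain b x ⁅y, z⁆ = extensionCochain b ⁅x, y⁆ z + extensionCochain b y ⁅x, z⁆ := by
  simp only [extensionCochain, add_apply_apply, wedge_apply, LinearMap.sub_apply, coord_one_lie hb,
    coord_two_lie hb, coord_four_lie hb, coord_five_lie hb]
  ring

theorem eq_zero_of_extensionCochain_eq_zero (hb : lieTwoCochain R L = bracketCochain η b) {z : L}
    (hz : z ∈ center R L) (hcz : extensionCochain b z = 0) : z = 0 := by
  obtain ⟨h0, h1, h2, h3⟩ := coord_eq_zero_of_mem_center hb hz
  have cochain_eq_zero (y : L) : extensionCochain b z y = 0 := by simp [hcz]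
  have h4 : b.coord 4 z = 0 := by
    simpa [extensionCochain, h1, h2] using cochain_eq_zero (b 2)
  have h5 : b.coord 5 z = 0 := by
    simpa [extensionCochain, h1, h2, h4] using cochain_eq_zero (b 1)
  refine b.forall_coord_eq_zero_iff.mp fun i => ?_
  fin_cases i <;> assumption

end L67

theorem L67_isCapable_general {F L : Type u} [Field F] [LieRing L] [LieAlgebra F L] {η : F}
    (h : IsL67 F L η) : IsCapable F L := by
  obtain ⟨b, h01, h02, h13, h23, h0⟩ := h
  have hb := L67.lieTwoCochain_eq_bracketCochain h01 h02 h13 h23 h0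
  exact isCapable_of_twoCochain (L67.extensionCochain b) (L67.extensionCochain_isCocycle hb)
    fun _ => L67.eq_zero_of_extensionCochain_eq_zero hb

/-- Over a field of characteristic 2, the Lie algebra `L_{6,7}^{(2)}(η)`, with `η = 0` or
`η = ω` for a fixed `ω ∈ F \ {x² + x : x ∈ F}`, is capable. -/
theorem L67_isCapable
    (F L : Type u) [Field F] [LieRing L] [LieAlgebra F L]
    (hchar : ringChar F = 2) (η ω : F)
    (hω : ∀ x : F, x ^ 2 + x ≠ ω)
    (hη : η = 0 ∨ η = ω)
    (h : IsL67 F L η) :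
    IsCapable F L :=
  L67_isCapable_general h
end

section
/- Let L be a finite-dimensional nilpotent Lie algebra over a field F of nilpotency class 3 with dim [L,L] = 2. Then there exist ideals T and A of L with L = T ⊕ A (internal direct sum of Lie algebras), A abelian, and Z(T) = [L,L] ∩ Z(L) = L³ = T³, where L³ = [L,[L,L]]; in particular T is a stem Lie algebra. -/
/-!
Over a field every Lie algebra `L` splits as `T ⊕ A` with `A` central and `Z(T) = [L, L] ∩ Z(L)`:
take for `A` a linear complement of `[L, L] ∩ Z(L)` in `Z(L)` and for `T` a linear complement of `A`
containing `[L, L]`. Any subspace containing `[L, L]` or contained in `Z(L)` is an ideal, and since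
`A` is central, brackets with `L` are brackets with `T`, whence `Tⁱ = Lⁱ` for `i ≥ 2`.
In class three `0 ≠ L³ ⊆ [L, L] ∩ Z(L) ⊊ [L, L]`, so `dim [L, L] = 2` forces `L³ = [L, L] ∩ Z(L)`.
-/

open Module

universe u

theorem exists_isCompl_le_le_inf_eq {α : Type*} [Lattice α] [BoundedOrder α] [IsModularLattice α]
    [ComplementedLattice α] (d z : α) :
    ∃ t a : α, IsCompl t a ∧ d ≤ t ∧ a ≤ z ∧ t ⊓ z = d ⊓ z := by
  obtain ⟨a, hdisj, hsup⟩ :=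
    IsModularLattice.exists_disjoint_and_sup_eq (inf_le_right : d ⊓ z ≤ z)
  have haz : a ≤ z := hsup ▸ le_sup_right
  have hda : Disjoint d a := by
    rw [disjoint_iff, ← inf_eq_right.2 haz, ← inf_assoc]
    exact hdisj.eq_bot
  obtain ⟨t, hdt, hta⟩ := hda.exists_isCompl
  refine ⟨t, a, hta, hdt, haz, ?_⟩
  calc t ⊓ z = (d ⊓ z ⊔ a) ⊓ t := by rw [hsup, inf_comm]
    _ = d ⊓ z ⊔ a ⊓ t := sup_inf_assoc_of_le a (inf_le_left.trans hdt)
    _ = d ⊓ z := by rw [hta.symm.inf_eq_bot, sup_bot_eq]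

section LieAlgebra

variable {R L : Type*} [CommRing R] [LieRing L] [LieAlgebra R L]

theorem exists_lieIdeal_coe_eq_of_derived_le {p : Submodule R L}
    (hp : (⁅(⊤ : LieIdeal R L), (⊤ : LieIdeal R L)⁆).toSubmodule ≤ p) :
    ∃ I : LieIdeal R L, I.toSubmodule = p :=
  (p.exists_lieSubmodule_coe_eq_iff L).2 fun _ _ _ ↦
    hp (LieSubmodule.lie_mem_lie (LieSubmodule.mem_top _) (LieSubmodule.mem_top _))

theorem exists_lieIdeal_coe_eq_of_le_center {p : Submodule R L}
    (hp : p ≤ (LieAlgebra.center R L).toSubmodule) :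
    ∃ I : LieIdeal R L, I.toSubmodule = p :=
  (p.exists_lieSubmodule_coe_eq_iff L).2 fun x m hm ↦ by
    rw [hp hm x]
    exact p.zero_mem

theorem exists_isCompl_le_center_inf_center_eq [IsSemisimpleModule R L] :
    ∃ T A : LieIdeal R L, IsCompl T A ∧ A ≤ LieAlgebra.center R L ∧
      T ⊓ LieAlgebra.center R L =
        ⁅(⊤ : LieIdeal R L), (⊤ : LieIdeal R L)⁆ ⊓ LieAlgebra.center R L := by
  obtain ⟨t, a, hta, hdt, haz, hinf⟩ := exists_isCompl_le_le_inf_eq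
    (⁅(⊤ : LieIdeal R L), (⊤ : LieIdeal R L)⁆).toSubmodule (LieAlgebra.center R L).toSubmodule
  obtain ⟨T, rfl⟩ := exists_lieIdeal_coe_eq_of_derived_le hdt
  obtain ⟨A, rfl⟩ := exists_lieIdeal_coe_eq_of_le_center haz
  exact ⟨T, A, LieSubmodule.isCompl_toSubmodule.1 hta, haz,
    LieSubmodule.toSubmodule_injective hinf⟩

variable {T A : LieIdeal R L}

theorem lie_eq_top_lie_of_sup_eq_top (hTA : T ⊔ A = ⊤) (hA : A ≤ LieAlgebra.center R L)
    (I : LieIdeal R L) : ⁅T, I⁆ = ⁅(⊤ : LieIdeal R L), I⁆ := by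
  have hAI : ⁅A, I⁆ = ⊥ := by
    rw [LieSubmodule.lie_comm, LieSubmodule.lie_eq_bot_iff]
    exact fun x _ y hy ↦ hA hy x
  rw [← hTA, LieSubmodule.sup_lie, hAI, sup_bot_eq]

theorem lie_self_eq_derived_of_sup_eq_top (hTA : T ⊔ A = ⊤) (hA : A ≤ LieAlgebra.center R L) :
    ⁅T, T⁆ = ⁅(⊤ : LieIdeal R L), (⊤ : LieIdeal R L)⁆ := by
  rw [lie_eq_top_lie_of_sup_eq_top hTA hA, LieSubmodule.lie_comm,
    lie_eq_top_lie_of_sup_eq_top hTA hA]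

theorem mem_center_iff_forall_mem_lie_eq_zero (hTA : T ⊔ A = ⊤)
    (hA : A ≤ LieAlgebra.center R L) {x : L} :
    x ∈ LieAlgebra.center R L ↔ ∀ y ∈ T, ⁅x, y⁆ = 0 := by
  refine ⟨fun hx y _ ↦ by rw [← lie_skew, hx y, neg_zero], fun hx y ↦ ?_⟩
  obtain ⟨t, ht, a, ha, rfl⟩ := (LieSubmodule.mem_sup _ _ _).1 (hTA ▸ LieSubmodule.mem_top y)
  rw [← lie_skew, lie_add, hx t ht, hA ha x, add_zero, neg_zero]

end LieAlgebra

theorem inf_maxTrivSubmodule_eq_top_lie_of_finrank_eq_two {F L M : Type*} [Field F] [LieRing L]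
    [LieAlgebra F L] [AddCommGroup M] [Module F M] [LieRingModule L M] [LieModule F L M]
    {N : LieSubmodule F L M} (hN : finrank F N = 2) (hne : ⁅(⊤ : LieIdeal F L), N⁆ ≠ ⊥)
    (hbot : ⁅(⊤ : LieIdeal F L), ⁅(⊤ : LieIdeal F L), N⁆⁆ = ⊥) :
    N ⊓ LieModule.maxTrivSubmodule F L M = ⁅(⊤ : LieIdeal F L), N⁆ := by
  have : FiniteDimensional F N.toSubmodule := .of_finrank_pos (hN ▸ two_pos)
  have hle : ⁅(⊤ : LieIdeal F L), N⁆ ≤ N ⊓ LieModule.maxTrivSubmodule F L M :=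
    le_inf (LieSubmodule.lie_le_right _ _) ((LieModule.le_max_triv_iff_bracket_eq_bot F L M).2 hbot)
  have hlt : N ⊓ LieModule.maxTrivSubmodule F L M < N :=
    inf_lt_left.2 fun h ↦ hne ((LieModule.le_max_triv_iff_bracket_eq_bot F L M).1 h)
  have hfin : FiniteDimensional F (N ⊓ LieModule.maxTrivSubmodule F L M).toSubmodule :=
    Submodule.finiteDimensional_of_le ((LieSubmodule.toSubmodule_le_toSubmodule _ _).2 hlt.le)
  have hlt_two : finrank F (N ⊓ LieModule.maxTrivSubmodule F L M).toSubmodule < 2 :=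
    hN ▸ Submodule.finrank_lt_finrank_of_lt hlt
  have hpos : 0 < finrank F (⁅(⊤ : LieIdeal F L), N⁆).toSubmodule := by
    have := Submodule.finiteDimensional_of_le hle
    rwa [Module.finrank_pos_iff, Submodule.nontrivial_iff_ne_bot, Ne,
      LieSubmodule.toSubmodule_eq_bot]
  exact (LieSubmodule.toSubmodule_injective
    (Submodule.eq_of_le_of_finrank_le hle (by lia))).symm

theorem class_three_decomposition_stem_plus_abelian_general
    {F L : Type*} [Field F] [LieRing L] [LieAlgebra F L]
    (hclass : LieModule.lowerCentralSeries F L L 2 ≠ ⊥ ∧ LieModule.lowerCentralSeries F L L 3 = ⊥)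
    (hder : finrank F ↥(LieModule.lowerCentralSeries F L L 1) = 2) :
    ∃ T A : LieIdeal F L,
      T ⊓ A = ⊥ ∧ T ⊔ A = ⊤ ∧
      (∀ x ∈ A, ∀ y ∈ A, ⁅x, y⁆ = 0) ∧
      (∀ x : L, (x ∈ T ∧ ∀ y ∈ T, ⁅x, y⁆ = 0) ↔ x ∈ LieModule.lowerCentralSeries F L L 2) ∧
      LieModule.lowerCentralSeries F L L 1 ⊓ LieAlgebra.center F L =
        LieModule.lowerCentralSeries F L L 2 ∧
      ⁅T, ⁅T, T⁆⁆ = LieModule.lowerCentralSeries F L L 2 ∧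
      (∀ x ∈ T, (∀ y ∈ T, ⁅x, y⁆ = 0) → x ∈ ⁅T, T⁆) := by
  simp only [LieModule.lowerCentralSeries_succ, LieModule.lowerCentralSeries_zero] at hclass ⊢
  have hDZ : ⁅(⊤ : LieIdeal F L), (⊤ : LieIdeal F L)⁆ ⊓ LieAlgebra.center F L =
      ⁅(⊤ : LieIdeal F L), ⁅(⊤ : LieIdeal F L), (⊤ : LieIdeal F L)⁆⁆ :=
    inf_maxTrivSubmodule_eq_top_lie_of_finrank_eq_two hder hclass.1 hclass.2
  obtain ⟨T, A, hTA, hA, hTZ⟩ := exists_isCompl_le_center_inf_center_eq (R := F) (L := L)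
  have hTT := lie_self_eq_derived_of_sup_eq_top hTA.sup_eq_top hA
  have hcenter (x : L) : (x ∈ T ∧ ∀ y ∈ T, ⁅x, y⁆ = 0) ↔
      x ∈ ⁅(⊤ : LieIdeal F L), ⁅(⊤ : LieIdeal F L), (⊤ : LieIdeal F L)⁆⁆ := by
    rw [← mem_center_iff_forall_mem_lie_eq_zero hTA.sup_eq_top hA, ← LieSubmodule.mem_inf, hTZ, hDZ]
  refine ⟨T, A, hTA.inf_eq_bot, hTA.sup_eq_top, fun x _ y hy ↦ hA hy x, hcenter, hDZ, ?_, ?_⟩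
  · rw [hTT, lie_eq_top_lie_of_sup_eq_top hTA.sup_eq_top hA]
  · intro x hxT hx
    rw [hTT]
    exact LieSubmodule.lie_le_right _ _ ((hcenter x).1 ⟨hxT, hx⟩)

/-- A finite-dimensional nilpotent Lie algebra of class 3 with 2-dimensional derived
subalgebra decomposes as `L = T ⊕ A` with `A` abelian and
`Z(T) = [L,L] ∩ Z(L) = L³ = T³`; in particular `T` is stem. -/
theorem class_three_decomposition_stem_plus_abelian
    (F L : Type u) [Field F] [LieRing L] [LieAlgebra F L] [FiniteDimensional F L]
    (hclass : LieModule.lowerCentralSeries F L L 2 ≠ ⊥ ∧ LieModule.lowerCentralSeries F L L 3 = ⊥)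
    (hder : finrank F ↥(LieModule.lowerCentralSeries F L L 1) = 2) :
    ∃ T A : LieIdeal F L,
      T ⊓ A = ⊥ ∧ T ⊔ A = ⊤ ∧
      (∀ x ∈ A, ∀ y ∈ A, ⁅x, y⁆ = 0) ∧
      (∀ x : L, (x ∈ T ∧ ∀ y ∈ T, ⁅x, y⁆ = 0) ↔ x ∈ LieModule.lowerCentralSeries F L L 2) ∧
      LieModule.lowerCentralSeries F L L 1 ⊓ LieAlgebra.center F L = LieModule.lowerCentralSeries F L L 2 ∧
      ⁅T, ⁅T, T⁆⁆ = LieModule.lowerCentralSeries F L L 2 ∧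
      (∀ x ∈ T, (∀ y ∈ T, ⁅x, y⁆ = 0) → x ∈ ⁅T, T⁆) :=
  class_three_decomposition_stem_plus_abelian_general hclass hder
end

section
/- Let L be a finite-dimensional nilpotent stem Lie algebra over a field F of nilpotency class 3 with dim [L,L] = 2, and suppose L = I + K where I is an ideal of L isomorphic to L_{4,3}, K is a nonzero abelian subalgebra of L with K ∩ I = 0, and [I,K] ⊆ Z(I) = Z(L). Then dim K = 1, [I,K] = Z(L), and L is isomorphic to L_{5,5} (in particular dim L = 5). -/
open Module

universe u

/-- `L` is isomorphic to `L_{5,5}`: basis `x₁,…,x₅` with `[x₁,x₂]=x₃`, `[x₁,x₃]=x₅`, `[x₂,x₄]=x₅`. -/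
def IsL55 (F : Type u) (L : Type u) [Field F] [LieRing L] [LieAlgebra F L] : Prop :=
  ∃ b : Basis (Fin 5) F L,
    ⁅b 0, b 1⁆ = b 2 ∧
    ⁅b 0, b 2⁆ = b 4 ∧
    ⁅b 1, b 3⁆ = b 4 ∧
    ∀ i j : Fin 5, i < j → (i, j) ≠ (0, 1) → (i, j) ≠ (0, 2) → (i, j) ≠ (1, 3) → ⁅b i, b j⁆ = 0

/-!
Write `x₁, …, x₄` for the basis of `I`. The centre of `L` is `Z(I) = F x₄`, so bracketing with `x₂`
is a linear map `K → F x₄`. It is injective: if `k ∈ K` commutes with `x₂` and `[x₁, k] = a x₄`,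
then `k - a x₃` commutes with `x₁` and `x₂`, which generate `I`, and with `K`, since `[x₃, K] = 0`
by the Jacobi identity; hence it is central, so `k ∈ I ∩ K = 0`. As `K ≠ 0`, this makes `K` a line
`F k` with `[x₂, k] = x₄`, and replacing `k` by `k - a x₃` gives the remaining basis vector
of `L_{5,5}`.
-/

/-- The vectors `x 0, …, x 3` satisfy the bracket relations of the basis `x₁, …, x₄` of `L_{4,3}`
(with indices shifted by one). Linear independence is a separate hypothesis where it is needed. -/
structure L43Relations {L : Type*} [LieRing L] (x : Fin 4 → L) : Prop where
  lie_zero_one : ⁅x 0, x 1⁆ = x 2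
  lie_zero_two : ⁅x 0, x 2⁆ = x 3
  lie_eq_zero : ∀ i j, i < j → (i, j) ≠ (0, 1) → (i, j) ≠ (0, 2) → ⁅x i, x j⁆ = 0

theorem exists_eq_span_singleton_of_map_le_span_singleton {F V W : Type*} [DivisionRing F]
    [AddCommGroup V] [Module F V] [AddCommGroup W] [Module F W] {f : V →ₗ[F] W}
    {K : Submodule F V} {w : W} (hK : K ≠ ⊥) (hmap : K.map f ≤ F ∙ w)
    (hker : Disjoint K f.ker) : ∃ k, f k = w ∧ K = F ∙ k := by
  have hinj : ∀ v ∈ K, f v = 0 → v = 0 := LinearMap.disjoint_ker.1 hker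
  have hscalar : ∀ v ∈ K, ∃ c : F, c • w = f v := fun v hv ↦
    Submodule.mem_span_singleton.1 (hmap (Submodule.mem_map_of_mem hv))
  obtain ⟨v, hv, hv0⟩ := K.exists_mem_ne_zero_of_ne_bot hK
  obtain ⟨c, hc⟩ := hscalar v hv
  have hc0 : c ≠ 0 := by
    rintro rfl
    exact hv0 (hinj v hv (by rw [← hc, zero_smul]))
  have hk : c⁻¹ • v ∈ K := K.smul_mem _ hv
  have hfk : f (c⁻¹ • v) = w := by rw [map_smul, ← hc, inv_smul_smul₀ hc0]
  refine ⟨c⁻¹ • v, hfk, le_antisymm (fun u hu ↦ ?_) ((K.span_singleton_le_iff_mem _).2 hk)⟩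
  obtain ⟨d, hd⟩ := hscalar u hu
  have hu' : u - d • c⁻¹ • v = 0 :=
    hinj _ (K.sub_mem hu (K.smul_mem d hk)) (by rw [map_sub, map_smul, hfk, hd, sub_self])
  exact Submodule.mem_span_singleton.2 ⟨d, (sub_eq_zero.1 hu').symm⟩

theorem lie_lie_eq_zero_of_lie_mem_center {R L : Type*} [CommRing R] [LieRing L] [LieAlgebra R L]
    {a b k : L} (ha : ⁅a, k⁆ ∈ LieAlgebra.center R L) (hb : ⁅b, k⁆ ∈ LieAlgebra.center R L) :
    ⁅⁅a, b⁆, k⁆ = 0 := by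
  rw [lie_lie, (LieModule.mem_maxTrivSubmodule R L L _).1 hb a,
    (LieModule.mem_maxTrivSubmodule R L L _).1 ha b, sub_zero]

namespace L43Relations

section LieRing

variable {L : Type*} [LieRing L] {x : Fin 4 → L}

theorem lie_zero_three (hx : L43Relations x) : ⁅x 0, x 3⁆ = 0 :=
  hx.lie_eq_zero 0 3 (by decide) (by decide) (by decide)

theorem lie_one_two (hx : L43Relations x) : ⁅x 1, x 2⁆ = 0 :=
  hx.lie_eq_zero 1 2 (by decide) (by decide) (by decide)

theorem lie_one_three (hx : L43Relations x) : ⁅x 1, x 3⁆ = 0 :=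
  hx.lie_eq_zero 1 3 (by decide) (by decide) (by decide)

theorem lie_two_three (hx : L43Relations x) : ⁅x 2, x 3⁆ = 0 :=
  hx.lie_eq_zero 2 3 (by decide) (by decide) (by decide)

theorem lie_apply_eq_zero (hx : L43Relations x) {w : L} (h0 : ⁅x 0, w⁆ = 0) (h1 : ⁅x 1, w⁆ = 0)
    (i : Fin 4) : ⁅x i, w⁆ = 0 := by
  have h2 : ⁅x 2, w⁆ = 0 := by rw [← hx.lie_zero_one, lie_lie, h0, h1, lie_zero, lie_zero, sub_zero]
  have h3 : ⁅x 3, w⁆ = 0 := by rw [← hx.lie_zero_two, lie_lie, h0, h2, lie_zero, lie_zero, sub_zero]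
  fin_cases i
  exacts [h0, h1, h2, h3]

end LieRing

section CommRing

variable {R L : Type*} [CommRing R] [LieRing L] [LieAlgebra R L] {x : Fin 4 → L}

theorem lie_eq_zero_of_mem_span (hx : L43Relations x) {w : L} (h0 : ⁅x 0, w⁆ = 0)
    (h1 : ⁅x 1, w⁆ = 0) {y : L} (hy : y ∈ Submodule.span R (Set.range x)) : ⁅y, w⁆ = 0 := by
  induction hy using Submodule.span_induction with
  | mem y hy =>
    obtain ⟨i, rfl⟩ := hy
    exact hx.lie_apply_eq_zero h0 h1 i
  | zero => exact zero_lie w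
  | add y z _ _ hy hz => rw [add_lie, hy, hz, add_zero]
  | smul c y _ hy => rw [smul_lie, hy, smul_zero]

theorem exists_lie_one_eq_smul (hx : L43Relations x) {y : L}
    (hy : y ∈ Submodule.span R (Set.range x)) : ∃ c : R, ⁅x 1, y⁆ = c • x 2 := by
  obtain ⟨c, rfl⟩ := (Submodule.mem_span_range_iff_exists_fun R).1 hy
  refine ⟨-c 0, ?_⟩
  simp [Fin.sum_univ_four, hx.lie_one_two, hx.lie_one_three, ← lie_skew (x 1) (x 0),
    hx.lie_zero_one]

theorem notMem_span_of_lie_one_eq [Nontrivial R] (hx : L43Relations x)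
    (hli : LinearIndependent R x) {y : L} (hy : ⁅x 1, y⁆ = x 3) :
    y ∉ Submodule.span R (Set.range x) := by
  intro hmem
  obtain ⟨c, hc⟩ := hx.exists_lie_one_eq_smul hmem
  have h := Fintype.linearIndependent_iff.1 hli ![0, 0, -c, 1]
    (by simp [Fin.sum_univ_four, ← hy, hc]) 3
  exact one_ne_zero h

theorem mem_center_span_iff (hx : L43Relations x) (hli : LinearIndependent R x) (z : L) :
    (z ∈ Submodule.span R (Set.range x) ∧ ∀ y ∈ Submodule.span R (Set.range x), ⁅z, y⁆ = 0) ↔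
      z ∈ R ∙ x 3 := by
  have hmem (i : Fin 4) : x i ∈ Submodule.span R (Set.range x) := Submodule.subset_span ⟨i, rfl⟩
  rw [Submodule.mem_span_singleton]
  constructor
  · rintro ⟨hz, hcomm⟩
    obtain ⟨c, rfl⟩ := (Submodule.mem_span_range_iff_exists_fun R).1 hz
    have e0 : c 1 • x 2 + c 2 • x 3 = 0 := by
      simpa [Fin.sum_univ_four, hx.lie_zero_one, hx.lie_zero_two, hx.lie_zero_three]
        using (lie_skew _ _).symm.trans (neg_eq_zero.2 (hcomm (x 0) (hmem 0)))
    have e1 : c 0 • x 2 = 0 := by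
      simpa [Fin.sum_univ_four, hx.lie_zero_one, ← lie_skew (x 2) (x 1), ← lie_skew (x 3) (x 1),
        hx.lie_one_two, hx.lie_one_three] using hcomm (x 1) (hmem 1)
    have hli' := Fintype.linearIndependent_iff.1 hli
    have h0 : c 0 = 0 := hli' ![0, 0, c 0, 0] (by simp [Fin.sum_univ_four, e1]) 2
    have h1 : c 1 = 0 := hli' ![0, 0, c 1, c 2] (by simp [Fin.sum_univ_four, e0]) 2
    have h2 : c 2 = 0 := hli' ![0, 0, c 1, c 2] (by simp [Fin.sum_univ_four, e0]) 3
    exact ⟨c 3, by simp [Fin.sum_univ_four, h0, h1, h2]⟩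
  · rintro ⟨c, rfl⟩
    refine ⟨Submodule.smul_mem _ c (hmem 3), fun y hy ↦ ?_⟩
    rw [smul_lie, ← lie_skew, hx.lie_eq_zero_of_mem_span hx.lie_zero_three hx.lie_one_three hy,
      neg_zero, smul_zero]

theorem mem_center_of_lie_eq_zero (hx : L43Relations x) {K : Submodule R L}
    (hsum : Submodule.span R (Set.range x) ⊔ K = ⊤) {w : L} (h0 : ⁅x 0, w⁆ = 0)
    (h1 : ⁅x 1, w⁆ = 0) (hK : ∀ k ∈ K, ⁅k, w⁆ = 0) : w ∈ LieAlgebra.center R L := by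
  rw [LieModule.mem_maxTrivSubmodule]
  intro y
  obtain ⟨i, hi, k, hk, rfl⟩ := Submodule.mem_sup.1 (hsum ▸ Submodule.mem_top : y ∈ _ ⊔ K)
  rw [add_lie, hx.lie_eq_zero_of_mem_span h0 h1 hi, hK k hk, add_zero]

theorem disjoint_ker_ad_one (hx : L43Relations x) {K : Submodule R L}
    (hcenter : (LieAlgebra.center R L).toSubmodule ≤ R ∙ x 3)
    (hab : ∀ a ∈ K, ∀ b ∈ K, ⁅a, b⁆ = 0)
    (hdisj : Disjoint (Submodule.span R (Set.range x)) K)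
    (hsum : Submodule.span R (Set.range x) ⊔ K = ⊤)
    (hlie : ∀ i, ∀ k ∈ K, ⁅x i, k⁆ ∈ LieAlgebra.center R L) :
    Disjoint K (LieAlgebra.ad R L (x 1)).ker := by
  refine LinearMap.disjoint_ker.2 fun k hk (h1 : ⁅x 1, k⁆ = 0) ↦ ?_
  have hmem (i : Fin 4) : x i ∈ Submodule.span R (Set.range x) := Submodule.subset_span ⟨i, rfl⟩
  have hlie2 : ∀ l ∈ K, ⁅x 2, l⁆ = 0 := fun l hl ↦ by
    rw [← hx.lie_zero_one, lie_lie_eq_zero_of_lie_mem_center (hlie 0 l hl) (hlie 1 l hl)]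
  obtain ⟨a, ha⟩ : ∃ a : R, a • x 3 = ⁅x 0, k⁆ :=
    Submodule.mem_span_singleton.1 (hcenter (hlie 0 k hk))
  have hcentral : k - a • x 2 ∈ LieAlgebra.center R L := by
    refine hx.mem_center_of_lie_eq_zero hsum ?_ ?_ fun l hl ↦ ?_
    · rw [lie_sub, lie_smul, hx.lie_zero_two, ha, sub_self]
    · rw [lie_sub, lie_smul, hx.lie_one_two, h1, smul_zero, sub_zero]
    · rw [lie_sub, lie_smul, hab l hl k hk, ← lie_skew, hlie2 l hl, neg_zero, smul_zero, sub_zero]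
  obtain ⟨b, hb⟩ : ∃ b : R, b • x 3 = k - a • x 2 :=
    Submodule.mem_span_singleton.1 (hcenter hcentral)
  have hkI : k ∈ Submodule.span R (Set.range x) := by
    rw [← sub_add_cancel k (a • x 2), ← hb]
    exact add_mem (Submodule.smul_mem _ b (hmem 3)) (Submodule.smul_mem _ a (hmem 2))
  exact Submodule.disjoint_def.1 hdisj k hkI hk

end CommRing

theorem exists_eq_span_singleton {F L : Type*} [Field F] [LieRing L] [LieAlgebra F L]
    {x : Fin 4 → L} (hx : L43Relations x) {K : Submodule F L} (hne : K ≠ ⊥)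
    (hcenter : (LieAlgebra.center F L).toSubmodule ≤ F ∙ x 3)
    (hab : ∀ a ∈ K, ∀ b ∈ K, ⁅a, b⁆ = 0)
    (hdisj : Disjoint (Submodule.span F (Set.range x)) K)
    (hsum : Submodule.span F (Set.range x) ⊔ K = ⊤)
    (hlie : ∀ i, ∀ k ∈ K, ⁅x i, k⁆ ∈ LieAlgebra.center F L) :
    ∃ k, ⁅x 1, k⁆ = x 3 ∧ K = F ∙ k :=
  exists_eq_span_singleton_of_map_le_span_singleton (f := (LieAlgebra.ad F L (x 1) : L →ₗ[F] L)) hne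
    (Submodule.map_le_iff_le_comap.2 fun k hk ↦ hcenter (hlie 1 k hk))
    (hx.disjoint_ker_ad_one hcenter hab hdisj hsum hlie)

section IsL55

variable {F L : Type u} [Field F] [LieRing L] [LieAlgebra F L] {x : Fin 4 → L}

theorem isL55_of_lie_eq_zero (hx : L43Relations x) (hli : LinearIndependent F x) {y : L}
    (hspan : Submodule.span F (Set.range x) ⊔ F ∙ y = ⊤) (h0 : ⁅x 0, y⁆ = 0)
    (h1 : ⁅x 1, y⁆ = x 3) : IsL55 F L := by
  have h2 : ⁅x 2, y⁆ = 0 := by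
    rw [← hx.lie_zero_one, lie_lie, h0, h1, hx.lie_zero_three, lie_zero, sub_zero]
  have h3 : ⁅y, x 3⁆ = 0 := by
    rw [← hx.lie_zero_two, leibniz_lie, ← lie_skew y (x 0), ← lie_skew y (x 2), h0, h2]
    simp only [neg_zero, zero_lie, lie_zero, add_zero]
  have hli' : LinearIndependent F (Fin.snoc x y : Fin 5 → L) :=
    hli.finSnoc (hx.notMem_span_of_lie_one_eq hli h1)
  have htop : ⊤ ≤ Submodule.span F (Set.range (Fin.snoc x y : Fin 5 → L)) := by
    rw [Fin.range_snoc, Submodule.span_insert, sup_comm, hspan]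
  let b : Basis (Fin 5) F L := (Basis.mk hli' htop).reindex (Equiv.swap 3 4)
  have hb : ⇑b = ![x 0, x 1, x 2, y, x 3] := by
    ext i
    fin_cases i <;> simp [b] <;> rfl
  refine ⟨b, ?_⟩
  rw [hb]
  refine ⟨hx.lie_zero_one, hx.lie_zero_two, h1, fun i j hij h01 h02 h13 ↦ ?_⟩
  fin_cases i <;> fin_cases j <;> first
    | exact absurd hij (by decide)
    | contradiction
    | exact h0
    | exact h2
    | exact h3
    | exact hx.lie_zero_three
    | exact hx.lie_one_two
    | exact hx.lie_one_three
    | exact hx.lie_two_three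

theorem isL55_of_lie_mem_span (hx : L43Relations x) (hli : LinearIndependent F x) {k : L}
    (hspan : Submodule.span F (Set.range x) ⊔ F ∙ k = ⊤) (h0 : ⁅x 0, k⁆ ∈ F ∙ x 3)
    (h1 : ⁅x 1, k⁆ = x 3) : IsL55 F L := by
  obtain ⟨a, ha⟩ := Submodule.mem_span_singleton.1 h0
  have hmem : a • x 2 ∈ Submodule.span F (Set.range x) :=
    Submodule.smul_mem _ a (Submodule.subset_span ⟨2, rfl⟩)
  refine hx.isL55_of_lie_eq_zero hli (y := k - a • x 2) (top_le_iff.1 ?_) ?_ ?_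
  · rw [← hspan]
    refine sup_le le_sup_left ((Submodule.span_singleton_le_iff_mem _ _).2 ?_)
    exact Submodule.mem_sup.2
      ⟨a • x 2, hmem, k - a • x 2, Submodule.mem_span_singleton_self _, add_sub_cancel _ _⟩
  · rw [lie_sub, lie_smul, hx.lie_zero_two, ha, sub_self]
  · rw [lie_sub, lie_smul, hx.lie_one_two, h1, smul_zero, sub_zero]

end IsL55

end L43Relations

theorem IsL55.finrank_eq {F L : Type u} [Field F] [LieRing L] [LieAlgebra F L]
    (h : IsL55 F L) : finrank F L = 5 := by
  obtain ⟨b, -⟩ := h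
  simpa using finrank_eq_card_basis b

/-- If a finite-dimensional stem nilpotent Lie algebra `L` of class 3 with
`dim [L,L] = 2` satisfies `L = I + K` with `I ≅ L_{4,3}` an ideal, `K` a nonzero abelian
subalgebra, `K ∩ I = 0` and `[I,K] ⊆ Z(I) = Z(L)`, then `dim K = 1`, `[I,K] = Z(L)`,
`dim L = 5` and `L ≅ L_{5,5}`. -/
theorem stem_class_three_semidirect_L43_abelian
    (F L : Type u) [Field F] [LieRing L] [LieAlgebra F L] [FiniteDimensional F L]
    (hclass : LieModule.lowerCentralSeries F L L 2 ≠ ⊥ ∧ LieModule.lowerCentralSeries F L L 3 = ⊥)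
    (hder : finrank F ↥(LieModule.lowerCentralSeries F L L 1) = 2)
    (hstem : LieAlgebra.center F L ≤ LieModule.lowerCentralSeries F L L 1)
    (I : LieIdeal F L) (K : LieSubalgebra F L)
    (x : Fin 4 → L)
    (hxspan : I.toSubmodule = Submodule.span F (Set.range x))
    (hxind : LinearIndependent F x)
    (hx1 : ⁅x 0, x 1⁆ = x 2) (hx2 : ⁅x 0, x 2⁆ = x 3)
    (hx0 : ∀ i j : Fin 4, i < j → (i, j) ≠ (0, 1) → (i, j) ≠ (0, 2) → ⁅x i, x j⁆ = 0)
    (hKne : K ≠ ⊥)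
    (hKab : ∀ a ∈ K, ∀ b ∈ K, ⁅a, b⁆ = 0)
    (hIK : I.toSubmodule ⊓ K.toSubmodule = ⊥)
    (hsum : I.toSubmodule ⊔ K.toSubmodule = ⊤)
    (hIKZ : ∀ a ∈ I, ∀ b ∈ K, ⁅a, b⁆ ∈ LieAlgebra.center F L)
    (hZI : ∀ z : L, (z ∈ I ∧ ∀ y ∈ I, ⁅z, y⁆ = 0) ↔ z ∈ LieAlgebra.center F L) :
    finrank F ↥K = 1 ∧
    Submodule.span F {z : L | ∃ a ∈ I, ∃ b ∈ K, ⁅a, b⁆ = z} =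
      (LieAlgebra.center F L).toSubmodule ∧
    finrank F L = 5 ∧
    IsL55 F L := by
  have hx : L43Relations x := ⟨hx1, hx2, hx0⟩
  have hxI (i : Fin 4) : x i ∈ I := by
    rw [← LieSubmodule.mem_toSubmodule, hxspan]
    exact Submodule.subset_span ⟨i, rfl⟩
  have hcenter : (LieAlgebra.center F L).toSubmodule = F ∙ x 3 := by
    ext z
    rw [← hx.mem_center_span_iff hxind, ← hxspan]
    exact (hZI z).symm
  have hlie : ∀ i, ∀ k ∈ K, ⁅x i, k⁆ ∈ LieAlgebra.center F L := fun i k ↦ hIKZ _ (hxI i) k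
  rw [hxspan] at hIK hsum
  obtain ⟨k, hk1, hKk⟩ := hx.exists_eq_span_singleton
    (mt (LieSubalgebra.toSubmodule_eq_bot K).1 hKne) hcenter.le hKab (disjoint_iff.2 hIK) hsum hlie
  have hk : k ∈ K.toSubmodule := hKk ▸ Submodule.mem_span_singleton_self k
  have hk0 : k ≠ 0 := fun h ↦ hxind.ne_zero 3 (by rw [← hk1, h, lie_zero])
  have hL55 : IsL55 F L := hx.isL55_of_lie_mem_span hxind (hKk ▸ hsum) (hcenter ▸ hlie 0 k hk) hk1
  have hK1 : finrank F K.toSubmodule = 1 := by rw [hKk, finrank_span_singleton hk0]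
  refine ⟨hK1, le_antisymm (Submodule.span_le.2 ?_) ?_, hL55.finrank_eq, hL55⟩
  · rintro _ ⟨a, ha, b, hb, rfl⟩
    exact hIKZ a ha b hb
  · rw [hcenter, Submodule.span_singleton_le_iff_mem]
    exact Submodule.subset_span ⟨x 1, hxI 1, k, hk, hk1⟩
end
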